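/- arXiv:2211.04962 — 3 statements merged into one kernel-verified Lean document; each statement's English description precedes it below -/
import Mathlib

section
/- Let Λ and Γ be finite dimensional algebras over an algebraically closed field K, let M be a finitely generated left Λ-module and N a finitely generated left Γ-module. Then rad(M⊗N) = rad M ⊗ N + M ⊗ rad N as a submodule of the (Λ⊗Γ)-module M⊗N. -/
open TensorProduct

section Pre
variable {K Λ Γ M N : Type*} [Field K] [Ring Λ] [Ring Γ] [Algebra K Λ] [Algebra K Γ]
  [AddCommGroup M] [Module K M] [Module Λ M] [IsScalarTower K Λ M]
  [AddCommGroup N] [Module K N] [Module Γ N] [IsScalarTower K Γ N]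

/-- The action of `Γ` on `M ⊗[K] N` through the right factor. -/
noncomputable def rsmul (g : Γ) (x : M ⊗[K] N) : M ⊗[K] N :=
  (TensorProduct.comm K M N).symm (g • TensorProduct.comm K M N x)

lemma rsmul_tmul (g : Γ) (m : M) (n : N) :
    rsmul g (m ⊗ₜ[K] n) = m ⊗ₜ[K] (g • n) := by
  simp [rsmul, TensorProduct.smul_tmul']

lemma rsmul_add (g : Γ) (x y : M ⊗[K] N) :
    rsmul g (x + y) = rsmul g x + rsmul g y := by
  simp [rsmul, smul_add]

/-- The right-factor `Γ`-module structure on `M ⊗[K] N`.  Not an instance, to avoid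
diamonds; it is only used to construct `tensorTensorModule` below. -/
noncomputable def tensorRightModule : Module Γ (M ⊗[K] N) where
  smul := rsmul
  one_smul x := by show rsmul 1 x = x; simp [rsmul]
  mul_smul g h x := by
    show rsmul (g * h) x = rsmul g (rsmul h x); simp [rsmul, mul_smul]
  smul_zero g := by show rsmul g 0 = 0; simp [rsmul]
  smul_add g x y := by show rsmul g (x + y) = rsmul g x + rsmul g y; exact rsmul_add g x y
  add_smul g h x := by
    show rsmul (g + h) x = rsmul g x + rsmul h x; simp [rsmul, add_smul]
  zero_smul x := by show rsmul 0 x = 0; simp [rsmul]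

instance tensorLeftTower : IsScalarTower K Λ (M ⊗[K] N) := by
  constructor
  intro c a x
  induction x using TensorProduct.induction_on with
  | zero => simp
  | tmul m n =>
      rw [TensorProduct.smul_tmul', TensorProduct.smul_tmul', smul_assoc]
      exact (TensorProduct.smul_tmul' c (a • m) n).symm
  | add x y hx hy => rw [smul_add, smul_add, hx, hy]; exact (smul_add c _ _).symm

lemma pre_smulCommClass :
    letI : Module Γ (M ⊗[K] N) := tensorRightModule
    SMulCommClass Λ Γ (M ⊗[K] N) := by
  letI : Module Γ (M ⊗[K] N) := tensorRightModule
  constructor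
  intro a g x
  show a • rsmul g x = rsmul g (a • x)
  induction x using TensorProduct.induction_on with
  | zero => simp [rsmul]
  | tmul m n => rw [rsmul_tmul, TensorProduct.smul_tmul', TensorProduct.smul_tmul', rsmul_tmul]
  | add x y hx hy => rw [rsmul_add, smul_add, hx, hy, smul_add, rsmul_add]

lemma pre_rightTower :
    letI : Module Γ (M ⊗[K] N) := tensorRightModule
    IsScalarTower K Γ (M ⊗[K] N) := by
  letI : Module Γ (M ⊗[K] N) := tensorRightModule
  constructor
  intro c g x
  show rsmul (c • g) x = c • rsmul g x
  unfold rsmul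
  rw [smul_assoc]
  exact map_smul (TensorProduct.comm K M N).symm c _

/-- The `(Λ ⊗[K] Γ)`-module structure on `M ⊗[K] N`, characterized by
`(a ⊗ₜ b) • (m ⊗ₜ n) = (a • m) ⊗ₜ (b • n)`. -/
noncomputable instance tensorTensorModule :
    Module (Λ ⊗[K] Γ) (M ⊗[K] N) :=
  letI : Module Γ (M ⊗[K] N) := tensorRightModule
  haveI := (pre_smulCommClass (K := K) (Λ := Λ) (Γ := Γ) (M := M) (N := N))
  haveI := (pre_rightTower (K := K) (Γ := Γ) (M := M) (N := N))
  TensorProduct.Algebra.module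

lemma tensorTensor_smul_tmul (a : Λ) (g : Γ) (m : M) (n : N) :
    (a ⊗ₜ[K] g) • (m ⊗ₜ[K] n) = (a • m) ⊗ₜ[K] (g • n) := by
  letI : Module Γ (M ⊗[K] N) := tensorRightModule
  haveI := (pre_smulCommClass (K := K) (Λ := Λ) (Γ := Γ) (M := M) (N := N))
  haveI := (pre_rightTower (K := K) (Γ := Γ) (M := M) (N := N))
  show TensorProduct.Algebra.moduleAux (a ⊗ₜ[K] g) (m ⊗ₜ[K] n) = _
  rw [TensorProduct.Algebra.moduleAux_apply]
  show a • rsmul g (m ⊗ₜ[K] n) = _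
  rw [rsmul_tmul, TensorProduct.smul_tmul']

instance tensorTensorTower : IsScalarTower K (Λ ⊗[K] Γ) (M ⊗[K] N) := by
  constructor
  intro c x v
  letI : Module Γ (M ⊗[K] N) := tensorRightModule
  haveI := (pre_smulCommClass (K := K) (Λ := Λ) (Γ := Γ) (M := M) (N := N))
  haveI := (pre_rightTower (K := K) (Γ := Γ) (M := M) (N := N))
  show TensorProduct.Algebra.moduleAux (c • x) v = c • TensorProduct.Algebra.moduleAux x v
  rw [map_smul, LinearMap.smul_apply]

end Pre

/-! `J(Λ) ⊗ Γ` and `Λ ⊗ J(Γ)` are nilpotent ideals of `Λ ⊗ Γ`, hence contained in its radical. They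
exhaust it, because the quotient by their sum is `Λ/J(Λ) ⊗ Γ/J(Γ)`: since `Γ/J(Γ)` is a product of
matrix rings over `K`, this is a product of matrix rings over `Λ/J(Λ)`, which is semisimple. Letting
both ideals act on `M ⊗ N` gives the formula for modules. -/

section SubmoduleMapTwo

variable {R : Type*} [CommSemiring R]

lemma map₂_map₂_map₂_comm {M₁ M₂ M₃ M₄ N₁₂ N₃₄ N₁₃ N₂₄ P : Type*}
    [AddCommMonoid M₁] [Module R M₁] [AddCommMonoid M₂] [Module R M₂]
    [AddCommMonoid M₃] [Module R M₃] [AddCommMonoid M₄] [Module R M₄]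
    [AddCommMonoid N₁₂] [Module R N₁₂] [AddCommMonoid N₃₄] [Module R N₃₄]
    [AddCommMonoid N₁₃] [Module R N₁₃] [AddCommMonoid N₂₄] [Module R N₂₄]
    [AddCommMonoid P] [Module R P]
    {f : N₁₂ →ₗ[R] N₃₄ →ₗ[R] P} {g : M₁ →ₗ[R] M₂ →ₗ[R] N₁₂} {h : M₃ →ₗ[R] M₄ →ₗ[R] N₃₄}
    {f' : N₁₃ →ₗ[R] N₂₄ →ₗ[R] P} {g' : M₁ →ₗ[R] M₃ →ₗ[R] N₁₃} {h' : M₂ →ₗ[R] M₄ →ₗ[R] N₂₄}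
    (h_comm : ∀ a b c d, f (g a b) (h c d) = f' (g' a c) (h' b d))
    (p₁ : Submodule R M₁) (p₂ : Submodule R M₂) (p₃ : Submodule R M₃) (p₄ : Submodule R M₄) :
    Submodule.map₂ f (Submodule.map₂ g p₁ p₂) (Submodule.map₂ h p₃ p₄) =
      Submodule.map₂ f' (Submodule.map₂ g' p₁ p₃) (Submodule.map₂ h' p₂ p₄) := by
  rw [Submodule.map₂_eq_span_image2 g, Submodule.map₂_eq_span_image2 h,
    Submodule.map₂_eq_span_image2 g', Submodule.map₂_eq_span_image2 h',
    Submodule.map₂_span_span, Submodule.map₂_span_span]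
  exact congrArg (Submodule.span R) (Set.image2_image2_image2_comm h_comm)

variable {A B C M N P : Type*} [Semiring A] [Semiring B] [Semiring C]
  [Algebra R A] [Algebra R B] [Algebra R C]
  [AddCommMonoid M] [Module R M] [Module A M] [IsScalarTower R A M]
  [AddCommMonoid N] [Module R N] [Module B N] [IsScalarTower R B N]
  [AddCommMonoid P] [Module R P] [Module C P] [IsScalarTower R C P]

lemma smul_eq_map₂_lsmul (p : Submodule R A) (r : Submodule R M) :
    p • r = Submodule.map₂ (Algebra.lsmul R R M).toLinearMap p r :=
  le_antisymm (Submodule.smul_le.2 fun _ ha _ hm ↦ Submodule.apply_mem_map₂ _ ha hm)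
    (Submodule.map₂_le.2 fun _ ha _ hm ↦ Submodule.smul_mem_smul ha hm)

lemma map₂_smul_map₂ {g : A →ₗ[R] B →ₗ[R] C} {f : M →ₗ[R] N →ₗ[R] P}
    (hgf : ∀ a b m n, g a b • f m n = f (a • m) (b • n))
    (p : Submodule R A) (q : Submodule R B) (r : Submodule R M) (s : Submodule R N) :
    Submodule.map₂ g p q • Submodule.map₂ f r s = Submodule.map₂ f (p • r) (q • s) := by
  simp only [smul_eq_map₂_lsmul]
  exact map₂_map₂_map₂_comm hgf p q r s

variable (R A M) in
lemma top_smul_top_eq_top : (⊤ : Submodule R A) • (⊤ : Submodule R M) = ⊤ :=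
  congrArg (Submodule.restrictScalars R) (Submodule.top_smul (⊤ : Submodule A M))

end SubmoduleMapTwo

section IdealMap

open Algebra.TensorProduct (includeLeft includeRight)

variable {R A B : Type*} [CommSemiring R] [Semiring A] [Semiring B] [Algebra R A] [Algebra R B]

lemma restrictScalars_map_includeLeft (I : Ideal A) :
    (I.map (includeLeft : A →ₐ[R] A ⊗[R] B)).restrictScalars R =
      Submodule.map₂ (mk R A B) (I.restrictScalars R) ⊤ := by
  rw [Ideal.map_includeLeft_eq, LinearMap.rTensor, range_map, Submodule.range_subtype,
    LinearMap.range_id]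

lemma restrictScalars_map_includeRight (J : Ideal B) :
    (J.map (includeRight : B →ₐ[R] A ⊗[R] B)).restrictScalars R =
      Submodule.map₂ (mk R A B) ⊤ (J.restrictScalars R) := by
  rw [Ideal.map_includeRight_eq, LinearMap.lTensor, range_map, Submodule.range_subtype,
    LinearMap.range_id]

lemma map_includeLeft_mul (I J : Ideal A) :
    (I * J).map (includeLeft : A →ₐ[R] A ⊗[R] B) =
      I.map (includeLeft : A →ₐ[R] A ⊗[R] B) * J.map (includeLeft : A →ₐ[R] A ⊗[R] B) := by
  apply Submodule.restrictScalars_injective R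
  simp only [Submodule.restrictScalars_mul, restrictScalars_map_includeLeft]
  rw [← smul_eq_mul, ← smul_eq_mul,
    map₂_smul_map₂ fun a b a' b' ↦ Algebra.TensorProduct.tmul_mul_tmul a a' b b',
    top_smul_top_eq_top]

lemma map_includeLeft_pow (I : Ideal A) (n : ℕ) :
    (I ^ n).map (includeLeft : A →ₐ[R] A ⊗[R] B) =
      I.map (includeLeft : A →ₐ[R] A ⊗[R] B) ^ n := by
  induction n with
  | zero => simp only [Submodule.pow_zero, Ideal.one_eq_top, Ideal.map_top]
  | succ n ih => rw [Submodule.pow_succ, Submodule.pow_succ, map_includeLeft_mul, ih]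

lemma isNilpotent_map_includeLeft {I : Ideal A} (hI : IsNilpotent I) :
    IsNilpotent (I.map (includeLeft : A →ₐ[R] A ⊗[R] B)) := by
  obtain ⟨n, hn⟩ := hI
  exact ⟨n, by simp only [← map_includeLeft_pow, hn, Submodule.zero_eq_bot, Ideal.map_bot]⟩

end IdealMap

section Jacobson

open Algebra.TensorProduct (includeLeft includeRight)

lemma le_jacobson_of_forall_isNilpotent {R : Type*} [Ring R] {I : Ideal R}
    (hI : ∀ x ∈ I, IsNilpotent x) : I ≤ Ring.jacobson R := by
  intro x hx
  rw [← Ideal.jacobson_bot, Ideal.mem_jacobson_iff]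
  intro y
  obtain ⟨z, hz⟩ := (hI (y * x) (I.mul_mem_left y hx)).isUnit_add_one.exists_left_inv
  exact ⟨z, by rw [Submodule.mem_bot, mul_assoc, ← mul_add_one, hz, sub_self]⟩

lemma le_jacobson_of_isNilpotent {R : Type*} [Ring R] {I : Ideal R} (hI : IsNilpotent I) :
    I ≤ Ring.jacobson R := by
  obtain ⟨n, hn⟩ := hI
  exact le_jacobson_of_forall_isNilpotent fun x hx ↦
    ⟨n, by simpa [hn] using Submodule.pow_mem_pow I hx n⟩

variable {R A B : Type*} [CommRing R] [Ring A] [Ring B] [Algebra R A] [Algebra R B]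

lemma map_includeLeft_le_jacobson {I : Ideal A} (hI : IsNilpotent I) :
    I.map (includeLeft : A →ₐ[R] A ⊗[R] B) ≤ Ring.jacobson (A ⊗[R] B) :=
  le_jacobson_of_isNilpotent (isNilpotent_map_includeLeft hI)

lemma map_includeRight_le_jacobson {J : Ideal B} (hJ : IsNilpotent J) :
    J.map (includeRight : B →ₐ[R] A ⊗[R] B) ≤ Ring.jacobson (A ⊗[R] B) := by
  let e : B ⊗[R] A ≃ₐ[R] A ⊗[R] B := Algebra.TensorProduct.comm R B A
  have : RingHomSurjective (e : B ⊗[R] A →+* A ⊗[R] B) := ⟨e.surjective⟩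
  refine Ideal.map_le_iff_le_comap.2 fun b hb ↦ ?_
  exact Ring.le_comap_jacobson (e : B ⊗[R] A →+* A ⊗[R] B)
    (map_includeLeft_le_jacobson hJ (Ideal.mem_map_of_mem _ hb))

lemma jacobson_tensorProduct_le {I : Ideal A} {J : Ideal B} [I.IsTwoSided] [J.IsTwoSided]
    (h : Ring.jacobson ((A ⧸ I) ⊗[R] (B ⧸ J)) = ⊥) :
    Ring.jacobson (A ⊗[R] B) ≤
      I.map (includeLeft : A →ₐ[R] A ⊗[R] B) ⊔ J.map (includeRight : B →ₐ[R] A ⊗[R] B) := by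
  let π : A ⊗[R] B →ₐ[R] (A ⧸ I) ⊗[R] (B ⧸ J) :=
    Algebra.TensorProduct.map (Ideal.Quotient.mkₐ R I) (Ideal.Quotient.mkₐ R J)
  have hI := Ideal.Quotient.mkₐ_surjective R I
  have hJ := Ideal.Quotient.mkₐ_surjective R J
  have : RingHomSurjective (π : A ⊗[R] B →+* (A ⧸ I) ⊗[R] (B ⧸ J)) :=
    ⟨Algebra.TensorProduct.map_surjective _ _ hI hJ⟩
  have hker := Algebra.TensorProduct.map_ker _ _ hI hJ
  rw [← RingHom.ker_coe_toRingHom (Ideal.Quotient.mkₐ R I), Ideal.Quotient.mkₐ_ker,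
    ← RingHom.ker_coe_toRingHom (Ideal.Quotient.mkₐ R J), Ideal.Quotient.mkₐ_ker] at hker
  rw [← hker]
  intro x hx
  exact h.le (Ring.le_comap_jacobson (π : A ⊗[R] B →+* (A ⧸ I) ⊗[R] (B ⧸ J)) hx)

theorem jacobson_tensorProduct (hA : IsNilpotent (Ring.jacobson A))
    (hB : IsNilpotent (Ring.jacobson B))
    (h : Ring.jacobson ((A ⧸ Ring.jacobson A) ⊗[R] (B ⧸ Ring.jacobson B)) = ⊥) :
    Ring.jacobson (A ⊗[R] B) =
      (Ring.jacobson A).map (includeLeft : A →ₐ[R] A ⊗[R] B) ⊔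
        (Ring.jacobson B).map (includeRight : B →ₐ[R] A ⊗[R] B) :=
  le_antisymm (jacobson_tensorProduct_le h)
    (sup_le (map_includeLeft_le_jacobson hA) (map_includeRight_le_jacobson hB))

end Jacobson

lemma isSemisimpleRing_tensorProduct (K Λ Γ : Type*) [Field K] [IsAlgClosed K]
    [Ring Λ] [Ring Γ] [Algebra K Λ] [Algebra K Γ] [IsSemisimpleRing Λ] [IsSemisimpleRing Γ]
    [FiniteDimensional K Γ] : IsSemisimpleRing (Λ ⊗[K] Γ) := by
  obtain ⟨n, d, -, ⟨e⟩⟩ := IsSemisimpleRing.exists_algEquiv_pi_matrix_of_isAlgClosed K Γ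
  let matrixProduct : Λ ⊗[K] Γ ≃ₐ[K] Π i : Fin n, Matrix (Fin (d i)) (Fin (d i)) Λ :=
    (Algebra.TensorProduct.congr AlgEquiv.refl e).trans <|
      (Algebra.TensorProduct.piRight K K Λ _).trans <|
        AlgEquiv.piCongrRight fun i ↦ (matrixEquivTensor (Fin (d i)) K Λ).symm
  exact matrixProduct.symm.toRingEquiv.isSemisimpleRing

section ModuleTensor

open Algebra.TensorProduct (includeLeft includeRight)

variable {K Λ Γ M N : Type*} [Field K] [Ring Λ] [Ring Γ] [Algebra K Λ] [Algebra K Γ]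
  [AddCommGroup M] [Module K M] [Module Λ M] [IsScalarTower K Λ M]
  [AddCommGroup N] [Module K N] [Module Γ N] [IsScalarTower K Γ N]

lemma map₂_mk_smul_top (p : Submodule K Λ) (q : Submodule K Γ) :
    Submodule.map₂ (mk K Λ Γ) p q • (⊤ : Submodule K (M ⊗[K] N)) =
      Submodule.map₂ (mk K M N) (p • ⊤) (q • ⊤) := by
  rw [← map₂_mk_top_top_eq_top, map₂_smul_map₂ tensorTensor_smul_tmul]

lemma map_includeLeft_smul_top (I : Ideal Λ) :
    (I.map (includeLeft : Λ →ₐ[K] Λ ⊗[K] Γ) •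
        (⊤ : Submodule (Λ ⊗[K] Γ) (M ⊗[K] N))).restrictScalars K =
      LinearMap.range (TensorProduct.map ((I • (⊤ : Submodule Λ M)).restrictScalars K).subtype
        (LinearMap.id : N →ₗ[K] N)) := by
  have h := map₂_mk_smul_top (M := M) (N := N) (I.restrictScalars K) (⊤ : Submodule K Γ)
  rw [top_smul_top_eq_top, ← restrictScalars_map_includeLeft] at h
  rw [range_map, Submodule.range_subtype, LinearMap.range_id]
  exact h

lemma map_includeRight_smul_top (J : Ideal Γ) :
    (J.map (includeRight : Γ →ₐ[K] Λ ⊗[K] Γ) •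
        (⊤ : Submodule (Λ ⊗[K] Γ) (M ⊗[K] N))).restrictScalars K =
      LinearMap.range (TensorProduct.map (LinearMap.id : M →ₗ[K] M)
        ((J • (⊤ : Submodule Γ N)).restrictScalars K).subtype) := by
  have h := map₂_mk_smul_top (M := M) (N := N) (⊤ : Submodule K Λ) (J.restrictScalars K)
  rw [top_smul_top_eq_top, ← restrictScalars_map_includeRight] at h
  rw [range_map, Submodule.range_subtype, LinearMap.range_id]
  exact h

end ModuleTensor

theorem radical_tensorProduct_general
    (K Λ Γ M N : Type*) [Field K] [IsAlgClosed K] [Ring Λ] [Ring Γ]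
    [Algebra K Λ] [Algebra K Γ] [IsSemiprimaryRing Λ] [IsSemiprimaryRing Γ]
    [FiniteDimensional K (Γ ⧸ Ring.jacobson Γ)]
    [AddCommGroup M] [Module K M] [Module Λ M] [IsScalarTower K Λ M]
    [AddCommGroup N] [Module K N] [Module Γ N] [IsScalarTower K Γ N] :
    Submodule.restrictScalars K
        ((⊥ : Ideal (Λ ⊗[K] Γ)).jacobson • (⊤ : Submodule (Λ ⊗[K] Γ) (M ⊗[K] N))) =
      LinearMap.range (TensorProduct.map
          ((((⊥ : Ideal Λ).jacobson • (⊤ : Submodule Λ M)).restrictScalars K).subtype)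
          (LinearMap.id : N →ₗ[K] N)) ⊔
        LinearMap.range (TensorProduct.map (LinearMap.id : M →ₗ[K] M)
          ((((⊥ : Ideal Γ).jacobson • (⊤ : Submodule Γ N)).restrictScalars K).subtype)) := by
  have := isSemisimpleRing_tensorProduct K (Λ ⧸ Ring.jacobson Λ) (Γ ⧸ Ring.jacobson Γ)
  have hJ := jacobson_tensorProduct (R := K) (A := Λ) (B := Γ) IsSemiprimaryRing.isNilpotent
    IsSemiprimaryRing.isNilpotent (IsSemisimpleRing.jacobson_eq_bot _)
  rw [← map_includeLeft_smul_top (Γ := Γ), ← map_includeRight_smul_top (Λ := Λ),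
    ← Submodule.restrictScalars_sup, ← Submodule.sup_smul]
  simp only [Ideal.jacobson_bot, hJ]

open TensorProduct in
/-- For finite dimensional algebras `Λ`, `Γ` over an algebraically closed
field `K` and finitely generated modules `M` over `Λ`, `N` over `Γ`:
`rad (M ⊗ N) = rad M ⊗ N + M ⊗ rad N` as submodules of the `(Λ⊗Γ)`-module `M ⊗[K] N`
(expressed as an equality of the underlying `K`-subspaces), where `rad M = (rad Λ)M`. -/
theorem radical_tensorProduct
    (K Λ Γ M N : Type*) [Field K] [IsAlgClosed K] [Ring Λ] [Ring Γ]
    [Algebra K Λ] [Algebra K Γ] [FiniteDimensional K Λ] [FiniteDimensional K Γ]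
    [AddCommGroup M] [Module K M] [Module Λ M] [IsScalarTower K Λ M] [Module.Finite Λ M]
    [AddCommGroup N] [Module K N] [Module Γ N] [IsScalarTower K Γ N] [Module.Finite Γ N] :
    Submodule.restrictScalars K
        ((⊥ : Ideal (Λ ⊗[K] Γ)).jacobson • (⊤ : Submodule (Λ ⊗[K] Γ) (M ⊗[K] N))) =
      LinearMap.range (TensorProduct.map
          ((((⊥ : Ideal Λ).jacobson • (⊤ : Submodule Λ M)).restrictScalars K).subtype)
          (LinearMap.id : N →ₗ[K] N)) ⊔
        LinearMap.range (TensorProduct.map (LinearMap.id : M →ₗ[K] M)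
          ((((⊥ : Ideal Γ).jacobson • (⊤ : Submodule Γ N)).restrictScalars K).subtype)) := by
  have := IsArtinianRing.of_finite K Λ
  have := IsArtinianRing.of_finite K Γ
  exact radical_tensorProduct_general K Λ Γ M N
end

section
/- Let Λ and Γ be finite dimensional algebras over an algebraically closed field K, let M be a nonzero finitely generated left Λ-module and N a nonzero finitely generated left Γ-module. Then M⊗N is a semisimple (Λ⊗Γ)-module if and only if M is a semisimple Λ-module and N is a semisimple Γ-module. -/
/-!
A complement of a submodule `P ≤ M` comes from a complement of `P ⊗ N ≤ M ⊗ N`: restrict a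
projection `M ⊗ N → P ⊗ N` to a slice `M ⊗ n` and contract `N` along a functional `φ` with
`φ n = 1`. Hence semisimplicity of `M ⊗ N` descends to `M`, and to `N` by symmetry.

Conversely, `M ⊗ N` is the sum of the images of `S ⊗ T` for simple `S ≤ M` and `T ≤ N`, so it is
enough that `S ⊗ T` is simple. Since `End S = K` by Schur's lemma, the density theorem says that
on any given element of `S ⊗ T`, every `K`-endomorphism of `S` acts as an element of `Λ`. Applied
to rank one endomorphisms, this produces from any nonzero element of a submodule some `n ≠ 0` such
that the submodule contains `m ⊗ n` for all `m`; simplicity of `T` then gives every pure tensor.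
-/

open TensorProduct

section TensorModule

variable {K Λ Γ M N : Type*} [Field K] [Ring Λ] [Ring Γ] [Algebra K Λ] [Algebra K Γ]
  [AddCommGroup M] [Module K M] [Module Λ M] [IsScalarTower K Λ M]
  [AddCommGroup N] [Module K N] [Module Γ N] [IsScalarTower K Γ N]

lemma tmul_one_smul (a : Λ) (x : M ⊗[K] N) : (a ⊗ₜ[K] (1 : Γ)) • x = a • x := by
  induction x with
  | zero => simp
  | add x y hx hy => rw [smul_add, hx, hy, smul_add]
  | tmul m n => rw [tensorTensor_smul_tmul, one_smul, smul_tmul']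

instance tensorTensorLeftTower : IsScalarTower Λ (Λ ⊗[K] Γ) (M ⊗[K] N) where
  smul_assoc a b x := by
    have smul_eq : a • b = (a ⊗ₜ[K] (1 : Γ)) * b := by
      induction b with
      | zero => simp
      | add b c hb hc => rw [smul_add, hb, hc, mul_add]
      | tmul b g => simp [smul_tmul']
    rw [smul_eq, mul_smul, tmul_one_smul]

lemma map_tensorTensor_smul_of_tmul {R X : Type*} [Semiring R] [AddCommMonoid X] [Module R X]
    {σ : Λ ⊗[K] Γ →+* R} {f : M ⊗[K] N →+ X}
    (hf : ∀ a g m n, f ((a • m) ⊗ₜ (g • n)) = σ (a ⊗ₜ g) • f (m ⊗ₜ n))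
    (b : Λ ⊗[K] Γ) (x : M ⊗[K] N) : f (b • x) = σ b • f x := by
  induction b with
  | zero => simp
  | add b c hb hc => rw [add_smul, map_add, hb, hc, map_add, add_smul]
  | tmul a g =>
    induction x with
    | zero => simp
    | add x y hx hy => rw [smul_add, map_add, hx, hy, map_add, smul_add]
    | tmul m n => rw [tensorTensor_smul_tmul, hf]

/-- The `(Λ ⊗ Γ)`-linear map `f ⊗ g` induced by a `Λ`-linear map `f` and a `Γ`-linear map `g`. -/
noncomputable def tensorTensorMap {M' N' : Type*}
    [AddCommGroup M'] [Module K M'] [Module Λ M'] [IsScalarTower K Λ M']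
    [AddCommGroup N'] [Module K N'] [Module Γ N'] [IsScalarTower K Γ N']
    (f : M →ₗ[Λ] M') (g : N →ₗ[Γ] N') : M ⊗[K] N →ₗ[Λ ⊗[K] Γ] M' ⊗[K] N' where
  __ := TensorProduct.map (f.restrictScalars K) (g.restrictScalars K)
  map_smul' := map_tensorTensor_smul_of_tmul (σ := .id _)
    (f := (TensorProduct.map (f.restrictScalars K) (g.restrictScalars K)).toAddMonoidHom)
    fun a g m n ↦ by simp [tensorTensor_smul_tmul]

lemma tensorTensorMap_tmul {M' N' : Type*}
    [AddCommGroup M'] [Module K M'] [Module Λ M'] [IsScalarTower K Λ M']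
    [AddCommGroup N'] [Module K N'] [Module Γ N'] [IsScalarTower K Γ N']
    (f : M →ₗ[Λ] M') (g : N →ₗ[Γ] N') (m : M) (n : N) :
    tensorTensorMap f g (m ⊗ₜ[K] n) = f m ⊗ₜ g n :=
  rfl

variable (K Λ Γ M N) in
/-- The swap `M ⊗ N → N ⊗ M`, semilinear over the swap `Λ ⊗ Γ → Γ ⊗ Λ` of the algebras. -/
noncomputable def tensorTensorComm :
    M ⊗[K] N →ₛₗ[((Algebra.TensorProduct.comm K Λ Γ).toRingEquiv : Λ ⊗[K] Γ →+* Γ ⊗[K] Λ)]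
      N ⊗[K] M where
  __ := TensorProduct.comm K M N
  map_smul' := map_tensorTensor_smul_of_tmul
    (f := (TensorProduct.comm K M N).toLinearMap.toAddMonoidHom)
    fun a g m n ↦ by simp [tensorTensor_smul_tmul]

variable (K Λ Γ M N) in
lemma isSemisimpleModule_tensorProduct_comm :
    IsSemisimpleModule (Λ ⊗[K] Γ) (M ⊗[K] N) ↔ IsSemisimpleModule (Γ ⊗[K] Λ) (N ⊗[K] M) :=
  (tensorTensorComm K Λ Γ M N).isSemisimpleModule_iff_of_bijective
    (TensorProduct.comm K M N).bijective

lemma eq_top_of_tmul_mem {P : Submodule (Λ ⊗[K] Γ) (M ⊗[K] N)} (h : ∀ m n, m ⊗ₜ n ∈ P) :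
    P = ⊤ := by
  refine Submodule.eq_top_iff'.2 fun x ↦ ?_
  induction x with
  | zero => exact P.zero_mem
  | add x y hx hy => exact P.add_mem hx hy
  | tmul m n => exact h m n

lemma iSup_range_tensorTensorMap_subtype {ι κ : Type*} {S : ι → Submodule Λ M}
    {T : κ → Submodule Γ N} (hS : ⨆ i, S i = ⊤) (hT : ⨆ j, T j = ⊤) :
    ⨆ p : ι × κ, LinearMap.range (tensorTensorMap (K := K) (S p.1).subtype (T p.2).subtype) =
      ⊤ := by
  refine eq_top_of_tmul_mem fun m n ↦ ?_
  have hm : m ∈ ⨆ i, S i := hS ▸ Submodule.mem_top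
  have hn : n ∈ ⨆ j, T j := hT ▸ Submodule.mem_top
  induction hm using Submodule.iSup_induction' with
  | zero => simp
  | add m m' _ _ hm hm' => rw [add_tmul]; exact add_mem hm hm'
  | mem i m hm =>
    induction hn using Submodule.iSup_induction' with
    | zero => simp
    | add n n' _ _ hn hn' => rw [tmul_add]; exact add_mem hn hn'
    | mem j n hn =>
      exact Submodule.mem_iSup_of_mem (i, j) ⟨(⟨m, hm⟩ : S i) ⊗ₜ (⟨n, hn⟩ : T j),
        tensorTensorMap_tmul _ _ _ _⟩

end TensorModule

section Descent

variable {K Λ Γ M N : Type*} [Field K] [Ring Λ] [Ring Γ] [Algebra K Λ] [Algebra K Γ]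
  [AddCommGroup M] [Module K M] [Module Λ M] [IsScalarTower K Λ M]
  [AddCommGroup N] [Module K N] [Module Γ N] [IsScalarTower K Γ N]

lemma isSemisimpleModule_left_of_tensorProduct [Nontrivial N]
    (h : IsSemisimpleModule (Λ ⊗[K] Γ) (M ⊗[K] N)) : IsSemisimpleModule Λ M := by
  obtain ⟨n, hn⟩ := exists_ne (0 : N)
  obtain ⟨φ, hφ⟩ := Module.Projective.exists_dual_eq_one K hn
  refine (isSemisimpleModule_iff Λ M).2 ⟨fun P ↦ ?_⟩
  let ι : P ⊗[K] N →ₗ[Λ ⊗[K] Γ] M ⊗[K] N := tensorTensorMap P.subtype LinearMap.id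
  have ι_injective : Function.Injective ι :=
    Module.Flat.rTensor_preserves_injective_linearMap (P.subtype.restrictScalars K)
      P.subtype_injective
  obtain ⟨r, hr⟩ := IsSemisimpleModule.extension_property ι ι_injective LinearMap.id
  let slice : M →ₗ[Λ] M ⊗[K] N := (AlgebraTensorModule.mk K Λ M N).flip n
  let contract : P ⊗[K] N →ₗ[Λ] P :=
    (AlgebraTensorModule.rid K Λ P).toLinearMap ∘ₗ AlgebraTensorModule.lTensor Λ P φ
  let f : M →ₗ[Λ] P := contract ∘ₗ r.restrictScalars Λ ∘ₗ slice
  refine ⟨LinearMap.ker f, LinearMap.isCompl_of_proj (f := f) fun p ↦ ?_⟩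
  have r_slice : r (p ⊗ₜ n) = p ⊗ₜ n := by
    simpa [ι, tensorTensorMap_tmul] using LinearMap.congr_fun hr (p ⊗ₜ n)
  calc f p = contract (p ⊗ₜ n) := congrArg contract r_slice
    _ = p := by simp [contract, hφ]

lemma isSemisimpleModule_right_of_tensorProduct [Nontrivial M]
    (h : IsSemisimpleModule (Λ ⊗[K] Γ) (M ⊗[K] N)) : IsSemisimpleModule Γ N :=
  isSemisimpleModule_left_of_tensorProduct ((isSemisimpleModule_tensorProduct_comm K Λ Γ M N).1 h)

end Descent

section Functional

variable {R V W : Type*} [CommSemiring R] [AddCommMonoid V] [Module R V] [AddCommMonoid W]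
  [Module R W]

lemma rTensor_smulRight (φ : Module.Dual R V) (v : V) (x : V ⊗[R] W) :
    (φ.smulRight v).rTensor W x = v ⊗ₜ TensorProduct.lid R W (φ.rTensor W x) := by
  induction x with
  | zero => simp
  | add x y hx hy => simp only [map_add, hx, hy, tmul_add]
  | tmul v' w => simp [smul_tmul]

lemma exists_lid_rTensor_ne_zero [Module.Free R V] {x : V ⊗[R] W} (hx : x ≠ 0) :
    ∃ φ : Module.Dual R V, TensorProduct.lid R W (φ.rTensor W x) ≠ 0 := by
  classical
  let b := Module.Free.chooseBasis R V
  have coords_ne_zero : equivFinsuppOfBasisLeft (N := W) b x ≠ 0 := by simpa using hx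
  obtain ⟨i, hi⟩ := Finsupp.ne_iff.1 coords_ne_zero
  exact ⟨b.coord i, by rwa [← equivFinsuppOfBasisLeft_apply]⟩

end Functional

section Density

variable {K Λ M N : Type*} [CommSemiring K] [Ring Λ] [Algebra K Λ] [AddCommGroup M] [Module K M]
  [Module Λ M] [IsScalarTower K Λ M] [AddCommMonoid N] [Module K N]

lemma exists_smul_eq_of_mem_finset [IsSemisimpleModule Λ M]
    (hM : Function.Surjective (algebraMap K (Module.End Λ M))) (f : Module.End K M)
    (s : Finset M) : ∃ a : Λ, ∀ m ∈ s, a • m = f m := by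
  let F : Module.End (Module.End Λ M) M :=
    { toFun := f
      map_add' := f.map_add
      map_smul' := fun g m ↦ by
        obtain ⟨c, rfl⟩ := hM g
        exact f.map_smul c m }
  obtain ⟨a, ha⟩ := jacobson_density F s
  exact ⟨a, fun m hm ↦ (ha m hm).symm⟩

lemma exists_smul_eq_rTensor [IsSemisimpleModule Λ M]
    (hM : Function.Surjective (algebraMap K (Module.End Λ M))) (f : Module.End K M)
    (x : M ⊗[K] N) : ∃ a : Λ, a • x = f.rTensor N x := by
  classical
  obtain ⟨s, rfl⟩ := TensorProduct.exists_finset x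
  obtain ⟨a, ha⟩ := exists_smul_eq_of_mem_finset hM f (s.image Prod.fst)
  refine ⟨a, ?_⟩
  rw [Finset.smul_sum, map_sum]
  refine Finset.sum_congr rfl fun p hp ↦ ?_
  rw [smul_tmul', ha _ (Finset.mem_image_of_mem _ hp), LinearMap.rTensor_tmul]

end Density

section Ascent

variable {K Λ Γ M N : Type*} [Field K] [Ring Λ] [Ring Γ] [Algebra K Λ] [Algebra K Γ]
  [AddCommGroup M] [Module K M] [Module Λ M] [IsScalarTower K Λ M]
  [AddCommGroup N] [Module K N] [Module Γ N] [IsScalarTower K Γ N]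

lemma rTensor_mem [IsSemisimpleModule Λ M]
    (hM : Function.Surjective (algebraMap K (Module.End Λ M))) (f : Module.End K M)
    {P : Submodule (Λ ⊗[K] Γ) (M ⊗[K] N)} {x : M ⊗[K] N} (hx : x ∈ P) : f.rTensor N x ∈ P := by
  obtain ⟨a, ha⟩ := exists_smul_eq_rTensor hM f x
  exact ha ▸ P.smul_of_tower_mem a hx

lemma isSimpleModule_tensorProduct [IsSimpleModule Λ M] [IsSimpleModule Γ N]
    (hM : Function.Surjective (algebraMap K (Module.End Λ M))) :
    IsSimpleModule (Λ ⊗[K] Γ) (M ⊗[K] N) := by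
  have := IsSimpleModule.nontrivial Λ M
  have := IsSimpleModule.nontrivial Γ N
  refine (isSimpleModule_iff _ _).2 ⟨fun P ↦ or_iff_not_imp_left.2 fun hP ↦ ?_⟩
  obtain ⟨x, hxP, hx⟩ := P.exists_mem_ne_zero_of_ne_bot hP
  obtain ⟨φ, hφ⟩ := exists_lid_rTensor_ne_zero hx
  set n₀ : N := TensorProduct.lid K N (φ.rTensor N x)
  have tmul_n₀_mem (m : M) : m ⊗ₜ n₀ ∈ P :=
    rTensor_smulRight φ m x ▸ rTensor_mem hM (φ.smulRight m) hxP
  refine eq_top_of_tmul_mem fun m n ↦ ?_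
  obtain ⟨g, rfl⟩ := IsSimpleModule.toSpanSingleton_surjective Γ hφ n
  simpa [tensorTensor_smul_tmul] using P.smul_mem ((1 : Λ) ⊗ₜ g) (tmul_n₀_mem m)

lemma isSemisimpleModule_tensorProduct [IsSemisimpleModule Λ M] [IsSemisimpleModule Γ N]
    (hM : ∀ S : Submodule Λ M, IsSimpleModule Λ S →
      Function.Surjective (algebraMap K (Module.End Λ S))) :
    IsSemisimpleModule (Λ ⊗[K] Γ) (M ⊗[K] N) := by
  have hS := IsSemisimpleModule.sSup_simples_eq_top Λ M
  have hT := IsSemisimpleModule.sSup_simples_eq_top Γ N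
  rw [sSup_eq_iSup'] at hS hT
  refine isSemisimpleModule_of_isSemisimpleModule_submodule' (fun ⟨⟨S, hS⟩, ⟨T, hT⟩⟩ ↦ ?_)
    (iSup_range_tensorTensorMap_subtype (K := K) hS hT)
  have : IsSimpleModule Λ S := hS
  have : IsSimpleModule Γ T := hT
  have : IsSimpleModule (Λ ⊗[K] Γ) (S ⊗[K] T) := isSimpleModule_tensorProduct (hM S hS)
  exact IsSemisimpleModule.range _

end Ascent

lemma algebraMap_end_surjective_of_isAlgClosed (K : Type*) {Λ S : Type*} [Field K] [IsAlgClosed K]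
    [Ring Λ] [Algebra K Λ] [FiniteDimensional K Λ] [AddCommGroup S] [Module K S] [Module Λ S]
    [IsScalarTower K Λ S] [IsSimpleModule Λ S] :
    Function.Surjective (algebraMap K (Module.End Λ S)) :=
  have : FiniteDimensional K S := Module.Finite.trans Λ S
  (IsSimpleModule.algebraMap_end_bijective_of_isAlgClosed K).2

theorem isSemisimpleModule_tensorProduct_iff_general
    (K Λ Γ M N : Type*) [Field K] [Ring Λ] [Ring Γ] [Algebra K Λ] [Algebra K Γ]
    [AddCommGroup M] [Module K M] [Module Λ M] [IsScalarTower K Λ M] [Nontrivial M]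
    [AddCommGroup N] [Module K N] [Module Γ N] [IsScalarTower K Γ N] [Nontrivial N]
    (hM : ∀ S : Submodule Λ M, IsSimpleModule Λ S →
      Function.Surjective (algebraMap K (Module.End Λ S))) :
    IsSemisimpleModule (Λ ⊗[K] Γ) (M ⊗[K] N) ↔
      (IsSemisimpleModule Λ M ∧ IsSemisimpleModule Γ N) :=
  ⟨fun h ↦ ⟨isSemisimpleModule_left_of_tensorProduct h,
    isSemisimpleModule_right_of_tensorProduct h⟩,
    fun ⟨_, _⟩ ↦ isSemisimpleModule_tensorProduct hM⟩

open TensorProduct in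
/-- For finite dimensional algebras `Λ`, `Γ` over an algebraically closed
field `K` and nonzero finitely generated modules `M`, `N`:
`M ⊗[K] N` is a semisimple `(Λ⊗Γ)`-module iff `M` and `N` are semisimple. -/
theorem isSemisimpleModule_tensorProduct_iff
    (K Λ Γ M N : Type*) [Field K] [IsAlgClosed K] [Ring Λ] [Ring Γ]
    [Algebra K Λ] [Algebra K Γ] [FiniteDimensional K Λ] [FiniteDimensional K Γ]
    [AddCommGroup M] [Module K M] [Module Λ M] [IsScalarTower K Λ M] [Module.Finite Λ M]
    [Nontrivial M]
    [AddCommGroup N] [Module K N] [Module Γ N] [IsScalarTower K Γ N] [Module.Finite Γ N]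
    [Nontrivial N] :
    IsSemisimpleModule (Λ ⊗[K] Γ) (M ⊗[K] N) ↔
      (IsSemisimpleModule Λ M ∧ IsSemisimpleModule Γ N) :=
  isSemisimpleModule_tensorProduct_iff_general K Λ Γ M N
    fun _ _ ↦ algebraMap_end_surjective_of_isAlgClosed K
end

section
/- Let Λ and Γ be finite dimensional algebras over an algebraically closed field K, let M be a finitely generated left Λ-module and N a finitely generated left Γ-module. If P_M → M is a projective cover of M and P_N → N is a projective cover of N, then the induced map P_M⊗P_N → M⊗N is a projective cover of the (Λ⊗Γ)-module M⊗N. Dually, if I_M and I_N are injective envelopes of M and N respectively, then I_M⊗I_N is an injective envelope of the (Λ⊗Γ)-module M⊗N. -/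
open TensorProduct

/-- `π : P → M` is a projective cover: `P` is projective and `π` is a surjection whose
kernel is superfluous (equivalently, contained in `rad P`). -/
def IsProjectiveCover (R : Type*) {P M : Type*} [Ring R]
    [AddCommGroup P] [Module R P] [AddCommGroup M] [Module R M] (π : P →ₗ[R] M) : Prop :=
  Module.Projective R P ∧ Function.Surjective π ∧
    ∀ W : Submodule R P, W ⊔ LinearMap.ker π = ⊤ → W = ⊤

/-- `ι : M → I` is an injective envelope: `I` is injective and `ι` is an injection whose
range is an essential submodule of `I`. -/
def IsInjectiveEnvelope (R : Type*) {M I : Type*} [Ring R]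
    [AddCommGroup M] [Module R M] [AddCommGroup I] [Module R I] (ι : M →ₗ[R] I) : Prop :=
  Module.Injective R I ∧ Function.Injective ι ∧
    ∀ W : Submodule R I, W ⊓ LinearMap.range ι = ⊥ → W = ⊥

/-!
The map `f ⊗ g` factors as `(f ⊗ id) ∘ (id ⊗ g)`, so superfluous kernels and essential ranges only
have to be studied for one-sided maps, and for these over `Λ` or `Γ` alone: a submodule which is
superfluous or essential over the smaller ring is so over `Λ ⊗[K] Γ`.

Over a semiprimary ring a submodule is superfluous as soon as it lies in the radical of the module.
Since `ker (f ⊗ V)` is generated by the images of `ker f` under the maps `m ↦ m ⊗ₜ v`, and linear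
maps preserve radicals, `ker (f ⊗ V)` lies in the radical if `ker f` does. For essential ranges,
an element of `M ⊗ V` has finitely many nonzero coordinates in a basis of `V`, and these can be
multiplied into the range of `f` one after the other.

Projective modules are retracts of free modules, and free modules tensor to free modules. Injective
modules are retracts of the coinduced modules `Hom_K(Λ, V)`, which tensor to coinduced modules when
the algebras are finite dimensional.
-/

section Superfluous

variable {R M M₂ : Type*} [Ring R] [AddCommGroup M] [Module R M] [AddCommGroup M₂] [Module R M₂]

/-- A submodule `N` of `M` is superfluous (or small) if it can be dropped from every sum of
submodules that equals `M`. -/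
def IsSuperfluous (N : Submodule R M) : Prop :=
  ∀ W : Submodule R M, W ⊔ N = ⊤ → W = ⊤

theorem IsSuperfluous.mono {N N' : Submodule R M} (h : N ≤ N') (hN' : IsSuperfluous N') :
    IsSuperfluous N :=
  fun W hW ↦ hN' W (top_unique (hW ▸ sup_le_sup_left h W))

theorem IsSuperfluous.comap {f : M →ₗ[R] M₂} (hf : Function.Surjective f)
    (hker : IsSuperfluous (LinearMap.ker f)) {N : Submodule R M₂} (hN : IsSuperfluous N) :
    IsSuperfluous (N.comap f) := by
  intro W hW
  have map_eq_top : W.map f = ⊤ := by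
    refine hN _ ?_
    rw [← Submodule.map_comap_eq_of_surjective hf N, ← Submodule.map_sup, hW, Submodule.map_top,
      LinearMap.range_eq_top.2 hf]
  exact hker W (by rw [← Submodule.comap_map_eq, map_eq_top, Submodule.comap_top])

theorem IsSuperfluous.of_comap_semilinear {S L : Type*} [Ring S] {φ : S →+* R} [AddCommGroup L]
    [Module S L] {e : L →ₛₗ[φ] M} (he : Function.Surjective e) {N : Submodule R M}
    (hN : IsSuperfluous (N.comap e)) : IsSuperfluous N := by
  intro W hW
  have comap_eq_top : W.comap e = ⊤ := by
    refine hN _ (eq_top_iff.2 fun y _ ↦ ?_)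
    obtain ⟨w, hw, n, hn, hwn⟩ := Submodule.mem_sup.1 (hW ▸ Submodule.mem_top : e y ∈ W ⊔ N)
    obtain ⟨y', rfl⟩ := he w
    refine Submodule.mem_sup.2 ⟨y', hw, y - y', ?_, add_sub_cancel _ _⟩
    rwa [Submodule.mem_comap, map_sub, ← hwn, add_sub_cancel_left]
  refine eq_top_iff.2 fun x _ ↦ ?_
  obtain ⟨y, rfl⟩ := he x
  exact (comap_eq_top ▸ Submodule.mem_top : y ∈ W.comap e)

theorem IsSuperfluous.ker_of_semiconj {S L L₂ : Type*} [Ring S] {φ : S →+* R} [AddCommGroup L]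
    [Module S L] [AddCommGroup L₂] [Module S L₂] {e : L →ₛₗ[φ] M} (he : Function.Surjective e)
    {e₂ : L₂ →ₛₗ[φ] M₂} (he₂ : Function.Injective e₂) {f : M →ₗ[R] M₂} {g : L →ₗ[S] L₂}
    (h : ∀ x, f (e x) = e₂ (g x)) (hg : IsSuperfluous (LinearMap.ker g)) :
    IsSuperfluous (LinearMap.ker f) :=
  .of_comap_semilinear he <| hg.mono fun x hx ↦ (map_eq_zero_iff e₂ he₂).1 ((h x).symm.trans hx)

theorem IsSuperfluous.le_jacobson {N : Submodule R M} (hN : IsSuperfluous N) :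
    N ≤ Module.jacobson R M := by
  refine le_sInf fun m hm ↦ ?_
  by_contra hle
  exact hm.1 (hN m (hm.2 _ (left_lt_sup.2 hle)))

theorem isSuperfluous_smul_top {I : Ideal R} (hI : IsNilpotent I) :
    IsSuperfluous (I • (⊤ : Submodule R M)) := by
  intro W hW
  have sup_pow_eq_top (n : ℕ) : W ⊔ I ^ n • (⊤ : Submodule R M) = ⊤ := by
    induction n with
    | zero => rw [I.pow_zero, Submodule.one_smul, sup_top_eq]
    | succ n ih =>
      refine top_unique ?_
      calc ⊤ = W ⊔ I ^ n • (W ⊔ I • ⊤) := by rw [hW, ih]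
        _ = W ⊔ (I ^ n • W ⊔ I ^ (n + 1) • ⊤) := by
          rw [Submodule.smul_sup, ← Submodule.mul_smul, ← I.pow_succ]
        _ ≤ W ⊔ I ^ (n + 1) • ⊤ :=
          sup_le le_sup_left (sup_le_sup_right Submodule.smul_le_right _)
  obtain ⟨n, hn⟩ := hI
  simpa [hn] using sup_pow_eq_top n

theorem jacobson_le_jacobson_smul_top [IsSemisimpleRing (R ⧸ Ring.jacobson R)] :
    Module.jacobson R M ≤ Ring.jacobson R • ⊤ := by
  have htorsion : Module.IsTorsionBySet R (M ⧸ Ring.jacobson R • (⊤ : Submodule R M))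
      (Ring.jacobson R) :=
    (Module.isTorsionBySet_quotient_iff _ _).2 fun _ _ hr ↦ Submodule.smul_mem_smul hr trivial
  let _ := htorsion.module
  have hsemisimple : IsSemisimpleModule R (M ⧸ Ring.jacobson R • (⊤ : Submodule R M)) :=
    (htorsion.semilinearMap.isSemisimpleModule_iff_of_bijective Function.bijective_id).2
      inferInstance
  simpa using IsSemisimpleModule.jacobson_le_ker R R _ _ (Ring.jacobson R • ⊤ : Submodule R M).mkQ

theorem isSuperfluous_of_le_jacobson [IsSemiprimaryRing R] {N : Submodule R M}
    (hN : N ≤ Module.jacobson R M) : IsSuperfluous N :=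
  (isSuperfluous_smul_top IsSemiprimaryRing.isNilpotent).mono
    (hN.trans jacobson_le_jacobson_smul_top)

end Superfluous

section Essential

variable {R M M₂ : Type*} [Ring R] [AddCommGroup M] [Module R M] [AddCommGroup M₂] [Module R M₂]

/-- A submodule `N` of `M` is essential (or large) if it meets every nonzero submodule of `M`
nontrivially. -/
def IsEssential (N : Submodule R M) : Prop :=
  ∀ W : Submodule R M, W ⊓ N = ⊥ → W = ⊥

theorem IsEssential.mono {N N' : Submodule R M} (h : N ≤ N') (hN : IsEssential N) :
    IsEssential N' :=
  fun W hW ↦ hN W (bot_unique (hW ▸ inf_le_inf_left W h))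

theorem isEssential_iff_exists_smul_mem {N : Submodule R M} :
    IsEssential N ↔ ∀ x : M, x ≠ 0 → ∃ r : R, r • x ≠ 0 ∧ r • x ∈ N := by
  constructor
  · intro hN x hx
    by_contra! hcon
    refine hx (Submodule.span_singleton_eq_bot.1 (hN (R ∙ x) (eq_bot_iff.2 ?_)))
    rintro _ ⟨hspan, hmem⟩
    obtain ⟨r, rfl⟩ := Submodule.mem_span_singleton.1 hspan
    by_contra hr
    exact hcon r hr hmem
  · intro h W hW
    refine (Submodule.eq_bot_iff W).2 fun x hx ↦ ?_
    by_contra hx0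
    obtain ⟨r, hr0, hr⟩ := h x hx0
    exact hr0 ((Submodule.eq_bot_iff _).1 hW _ ⟨W.smul_mem r hx, hr⟩)

theorem IsEssential.map {f : M →ₗ[R] M₂} (hf : Function.Injective f)
    (hrange : IsEssential (LinearMap.range f)) {N : Submodule R M} (hN : IsEssential N) :
    IsEssential (N.map f) := by
  intro W hW
  have comap_eq_bot : W.comap f = ⊥ := by
    refine hN _ ((Submodule.eq_bot_iff _).2 fun x hx ↦ hf ?_)
    rw [map_zero]
    exact (Submodule.eq_bot_iff _).1 hW _ ⟨hx.1, x, hx.2, rfl⟩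
  refine hrange W ?_
  rw [inf_comm, ← Submodule.map_comap_eq, comap_eq_bot, Submodule.map_bot]

theorem IsEssential.of_comap_semilinear {S L : Type*} [Ring S] {φ : S →+* R} [AddCommGroup L]
    [Module S L] {e : L →ₛₗ[φ] M} (he : Function.Bijective e) {N : Submodule R M}
    (hN : IsEssential (N.comap e)) : IsEssential N := by
  rw [isEssential_iff_exists_smul_mem] at hN ⊢
  intro x hx
  obtain ⟨y, rfl⟩ := he.2 x
  obtain ⟨s, hs0, hs⟩ := hN y fun hy ↦ hx (hy ▸ map_zero e)
  refine ⟨φ s, ?_, ?_⟩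
  · rw [← map_smulₛₗ]
    exact (map_ne_zero_iff e he.1).2 hs0
  · rw [← map_smulₛₗ]
    exact hs

theorem IsEssential.range_of_semiconj {S L L₂ : Type*} [Ring S] {φ : S →+* R} [AddCommGroup L]
    [Module S L] [AddCommGroup L₂] [Module S L₂] {e : L →ₛₗ[φ] M} {e₂ : L₂ →ₛₗ[φ] M₂}
    (he₂ : Function.Bijective e₂) {f : M →ₗ[R] M₂} {g : L →ₗ[S] L₂}
    (h : ∀ x, f (e x) = e₂ (g x)) (hg : IsEssential (LinearMap.range g)) :
    IsEssential (LinearMap.range f) :=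
  .of_comap_semilinear he₂ <| hg.mono <| LinearMap.range_le_iff_comap.2 <|
    eq_top_iff.2 fun x _ ↦ ⟨e x, h x⟩

theorem IsEssential.exists_smul_mem_of_finsupp {N : Submodule R M} (hN : IsEssential N)
    {ι : Type*} {x : ι →₀ M} (hx : x ≠ 0) :
    ∃ r : R, r • x ≠ 0 ∧ ∀ i, (r • x) i ∈ N := by
  classical
  suffices H : ∀ s : Finset ι, ∃ r : R, r • x ≠ 0 ∧ ∀ i ∈ s, (r • x) i ∈ N by
    obtain ⟨r, hr0, hr⟩ := H x.support
    refine ⟨r, hr0, fun i ↦ ?_⟩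
    by_cases hi : i ∈ x.support
    · exact hr i hi
    · simp [Finsupp.notMem_support_iff.1 hi]
  intro s
  induction s using Finset.induction_on with
  | empty => exact ⟨1, by simpa using hx, by simp⟩
  | insert i s _ ih =>
    obtain ⟨r, hr0, hr⟩ := ih
    by_cases hi : (r • x) i = 0
    · exact ⟨r, hr0, Finset.forall_mem_insert _ _ _ |>.2 ⟨hi ▸ N.zero_mem, hr⟩⟩
    · obtain ⟨t, ht0, ht⟩ := isEssential_iff_exists_smul_mem.1 hN _ hi
      refine ⟨t * r, ?_, Finset.forall_mem_insert _ _ _ |>.2 ⟨?_, fun j hj ↦ ?_⟩⟩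
      · rw [mul_smul]
        exact fun h ↦ ht0 (DFunLike.congr_fun h i)
      · rwa [mul_smul]
      · rw [mul_smul]
        exact N.smul_mem t (hr j hj)

end Essential

section OneSidedTensor

variable {K R M M₂ : Type*} (V : Type*) [Field K] [Ring R] [Algebra K R]
  [AddCommGroup M] [Module K M] [Module R M] [IsScalarTower K R M]
  [AddCommGroup M₂] [Module K M₂] [Module R M₂] [IsScalarTower K R M₂]
  [AddCommGroup V] [Module K V]

theorem ker_rTensor_le_jacobson {f : M →ₗ[R] M₂}
    (hf : LinearMap.ker f ≤ Module.jacobson R M) :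
    LinearMap.ker (AlgebraTensorModule.rTensor K V f) ≤ Module.jacobson R (M ⊗[K] V) := by
  have hexact : Function.Exact ((LinearMap.ker f).subtype.restrictScalars K)
      (f.restrictScalars K) := LinearMap.exact_subtype_ker_map f
  intro x hx
  obtain ⟨y, rfl⟩ := (Module.Flat.rTensor_exact V hexact x).1 hx
  clear hx
  induction y using TensorProduct.induction_on with
  | zero => simp
  | tmul m v =>
    exact Module.map_jacobson_le ((AlgebraTensorModule.mk K R M V).flip v)
      (Submodule.mem_map_of_mem (hf m.2))
  | add y z hy hz =>
    rw [map_add]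
    exact add_mem hy hz

theorem IsSuperfluous.ker_rTensor [IsSemiprimaryRing R] {f : M →ₗ[R] M₂}
    (hf : IsSuperfluous (LinearMap.ker f)) :
    IsSuperfluous (LinearMap.ker (AlgebraTensorModule.rTensor K V f)) :=
  isSuperfluous_of_le_jacobson (ker_rTensor_le_jacobson V hf.le_jacobson)

theorem IsEssential.range_rTensor {f : M →ₗ[R] M₂} (hf : IsEssential (LinearMap.range f)) :
    IsEssential (LinearMap.range (AlgebraTensorModule.rTensor K V f)) := by
  classical
  let b := Module.Basis.ofVectorSpace K V
  let e := TensorProduct.equivFinsuppOfBasisRight (M := M₂) b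
  have e_smul (r : R) (x : M₂ ⊗[K] V) : e (r • x) = r • e x := by
    ext i
    induction x using TensorProduct.induction_on with
    | zero => simp
    | tmul m v => simp [e, TensorProduct.smul_tmul', smul_comm r]
    | add x y hx hy => simp_all
  refine isEssential_iff_exists_smul_mem.2 fun x hx ↦ ?_
  obtain ⟨r, hr0, hr⟩ :=
    hf.exists_smul_mem_of_finsupp ((map_ne_zero_iff e e.injective).2 hx)
  rw [← e_smul] at hr0 hr
  refine ⟨r, (map_ne_zero_iff e e.injective).1 hr0, ?_⟩
  rw [← e.symm_apply_apply (r • x), TensorProduct.equivFinsuppOfBasisRight_symm_apply]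
  refine Submodule.sum_mem _ fun i _ ↦ ?_
  obtain ⟨m, hm⟩ := hr i
  exact ⟨m ⊗ₜ b i, by simp [hm]⟩

end OneSidedTensor

section TensorMap

variable {K Λ Γ L M M' N N' X : Type*} [Field K] [Ring Λ] [Ring Γ] [Algebra K Λ] [Algebra K Γ]
  [AddCommGroup L] [Module K L] [Module Λ L] [IsScalarTower K Λ L]
  [AddCommGroup M] [Module K M] [Module Λ M] [IsScalarTower K Λ M]
  [AddCommGroup M'] [Module K M'] [Module Λ M'] [IsScalarTower K Λ M']
  [AddCommGroup N] [Module K N] [Module Γ N] [IsScalarTower K Γ N]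
  [AddCommGroup N'] [Module K N'] [Module Γ N'] [IsScalarTower K Γ N']
  [AddCommGroup X] [Module (Λ ⊗[K] Γ) X]

theorem map_smul_of_map_smul_tmul {f : M ⊗[K] N →+ X}
    (hf : ∀ (a : Λ) (g : Γ) (m : M) (n : N),
      f ((a • m) ⊗ₜ (g • n)) = (a ⊗ₜ[K] g : Λ ⊗[K] Γ) • f (m ⊗ₜ n))
    (r : Λ ⊗[K] Γ) (x : M ⊗[K] N) : f (r • x) = r • f x := by
  induction r using TensorProduct.induction_on with
  | zero => simp
  | add r s hr hs => rw [add_smul, add_smul, map_add, hr, hs]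
  | tmul a g =>
    induction x using TensorProduct.induction_on with
    | zero => simp
    | add x y hx hy => rw [smul_add, map_add, map_add, smul_add, hx, hy]
    | tmul m n => rw [tensorTensor_smul_tmul, hf]

/-- The tensor product `f ⊗ g` of a `Λ`-linear map and a `Γ`-linear map, as a map of
`Λ ⊗[K] Γ`-modules. -/
noncomputable def tensorMap (f : M →ₗ[Λ] M') (g : N →ₗ[Γ] N') :
    M ⊗[K] N →ₗ[Λ ⊗[K] Γ] M' ⊗[K] N' where
  __ := TensorProduct.map (f.restrictScalars K) (g.restrictScalars K)
  map_smul' := map_smul_of_map_smul_tmul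
    (f := (TensorProduct.map (f.restrictScalars K) (g.restrictScalars K)).toAddMonoidHom)
    fun a c m n ↦ by simp [tensorTensor_smul_tmul]

@[simp]
theorem tensorMap_tmul (f : M →ₗ[Λ] M') (g : N →ₗ[Γ] N') (m : M) (n : N) :
    tensorMap (K := K) f g (m ⊗ₜ n) = f m ⊗ₜ g n :=
  rfl

theorem tensorMap_surjective {f : M →ₗ[Λ] M'} {g : N →ₗ[Γ] N'} (hf : Function.Surjective f)
    (hg : Function.Surjective g) : Function.Surjective (tensorMap (K := K) f g) :=
  TensorProduct.map_surjective hf hg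

theorem tensorMap_injective {f : M →ₗ[Λ] M'} {g : N →ₗ[Γ] N'} (hf : Function.Injective f)
    (hg : Function.Injective g) : Function.Injective (tensorMap (K := K) f g) :=
  TensorProduct.map_injective_of_flat_flat _ _ hf hg

theorem tensorLinearMap_ext {f g : M ⊗[K] N →ₗ[Λ ⊗[K] Γ] X}
    (h : ∀ m n, f (m ⊗ₜ n) = g (m ⊗ₜ n)) : f = g := by
  ext x
  induction x using TensorProduct.induction_on with
  | zero => simp
  | tmul m n => exact h m n
  | add x y hx hy => rw [map_add, map_add, hx, hy]

theorem tensorMap_comp_tensorMap {L' : Type*} [AddCommGroup L'] [Module K L'] [Module Γ L']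
    [IsScalarTower K Γ L'] (f' : M →ₗ[Λ] M') (f : L →ₗ[Λ] M) (g' : N →ₗ[Γ] N')
    (g : L' →ₗ[Γ] N) :
    tensorMap (K := K) f' g' ∘ₗ tensorMap f g = tensorMap (f' ∘ₗ f) (g' ∘ₗ g) :=
  tensorLinearMap_ext fun _ _ ↦ by simp

theorem tensorMap_id : tensorMap (K := K) (.id : M →ₗ[Λ] M) (.id : N →ₗ[Γ] N) = .id :=
  tensorLinearMap_ext fun _ _ ↦ by simp

variable (K Λ Γ M N) in
/-- The identity of `M ⊗[K] N`, comparing its `Λ`-module structure with the restriction of its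
`Λ ⊗[K] Γ`-module structure along `Λ → Λ ⊗[K] Γ`. -/
noncomputable def leftSemilinear :
    M ⊗[K] N →ₛₗ[(Algebra.TensorProduct.includeLeftRingHom : Λ →+* Λ ⊗[K] Γ)] M ⊗[K] N where
  toFun := id
  map_add' _ _ := rfl
  map_smul' a x := by
    induction x using TensorProduct.induction_on with
    | zero => simp
    | tmul m n => simp [tensorTensor_smul_tmul, TensorProduct.smul_tmul']
    | add x y hx hy => simp_all

variable (K Λ Γ M N) in
/-- The symmetry of the tensor product, comparing the `Γ`-module structure of `N ⊗[K] M` with the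
restriction of the `Λ ⊗[K] Γ`-module structure of `M ⊗[K] N` along `Γ → Λ ⊗[K] Γ`. -/
noncomputable def rightSemilinear :
    N ⊗[K] M →ₛₗ[((Algebra.TensorProduct.includeRight : Γ →ₐ[K] Λ ⊗[K] Γ) : Γ →+* Λ ⊗[K] Γ)]
      M ⊗[K] N where
  toFun := TensorProduct.comm K N M
  map_add' := map_add _
  map_smul' g x := by
    induction x using TensorProduct.induction_on with
    | zero => simp
    | tmul n m => simp [tensorTensor_smul_tmul, TensorProduct.smul_tmul']
    | add x y hx hy => simp_all

theorem tensorMap_id_leftSemilinear (f : M →ₗ[Λ] M') (x : M ⊗[K] N) :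
    tensorMap f (.id : N →ₗ[Γ] N) (leftSemilinear K Λ Γ M N x) =
      leftSemilinear K Λ Γ M' N (AlgebraTensorModule.rTensor K N f x) :=
  rfl

theorem tensorMap_id_rightSemilinear (g : N →ₗ[Γ] N') (x : N ⊗[K] M) :
    tensorMap (.id : M →ₗ[Λ] M) g (rightSemilinear K Λ Γ M N x) =
      rightSemilinear K Λ Γ M N' (AlgebraTensorModule.rTensor K M g x) := by
  induction x using TensorProduct.induction_on with
  | zero => simp
  | tmul n m => rfl
  | add x y hx hy => simp only [map_add, hx, hy]

theorem leftSemilinear_bijective : Function.Bijective (leftSemilinear K Λ Γ M N) :=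
  Function.bijective_id

theorem rightSemilinear_bijective : Function.Bijective (rightSemilinear K Λ Γ M N) :=
  (TensorProduct.comm K N M).bijective

theorem IsSuperfluous.ker_tensorMap [IsSemiprimaryRing Λ] [IsSemiprimaryRing Γ]
    {f : M →ₗ[Λ] M'} (hf : IsSuperfluous (LinearMap.ker f)) (hf' : Function.Surjective f)
    {g : N →ₗ[Γ] N'} (hg : IsSuperfluous (LinearMap.ker g)) :
    IsSuperfluous (LinearMap.ker (tensorMap (K := K) f g)) := by
  have ker_left : IsSuperfluous (LinearMap.ker (tensorMap (K := K) f (.id : N →ₗ[Γ] N))) :=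
    (hf.ker_rTensor N).ker_of_semiconj leftSemilinear_bijective.2 leftSemilinear_bijective.1
      (tensorMap_id_leftSemilinear f)
  have ker_right : IsSuperfluous (LinearMap.ker (tensorMap (K := K) (.id : M' →ₗ[Λ] M') g)) :=
    (hg.ker_rTensor M').ker_of_semiconj rightSemilinear_bijective.2 rightSemilinear_bijective.1
      (tensorMap_id_rightSemilinear g)
  rw [← LinearMap.id_comp f, ← LinearMap.comp_id g, ← tensorMap_comp_tensorMap,
    LinearMap.ker_comp]
  exact ker_left.comap (tensorMap_surjective hf' Function.surjective_id) ker_right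

theorem IsEssential.range_tensorMap {f : M →ₗ[Λ] M'} (hf : IsEssential (LinearMap.range f))
    (hf' : Function.Injective f) {g : N →ₗ[Γ] N'} (hg : IsEssential (LinearMap.range g)) :
    IsEssential (LinearMap.range (tensorMap (K := K) f g)) := by
  have range_left : IsEssential (LinearMap.range (tensorMap (K := K) f (.id : N' →ₗ[Γ] N'))) :=
    (hf.range_rTensor N').range_of_semiconj leftSemilinear_bijective
      (tensorMap_id_leftSemilinear f)
  have range_right : IsEssential (LinearMap.range (tensorMap (K := K) (.id : M →ₗ[Λ] M) g)) :=
    (hg.range_rTensor M).range_of_semiconj rightSemilinear_bijective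
      (tensorMap_id_rightSemilinear g)
  rw [← LinearMap.comp_id f, ← LinearMap.id_comp g, ← tensorMap_comp_tensorMap,
    LinearMap.range_comp]
  exact range_left.map (tensorMap_injective hf' Function.injective_id) range_right

end TensorMap

section Projective

variable {K Λ Γ M N : Type*} [Field K] [Ring Λ] [Ring Γ] [Algebra K Λ] [Algebra K Γ]
  [AddCommGroup M] [Module K M] [Module Λ M] [IsScalarTower K Λ M]
  [AddCommGroup N] [Module K N] [Module Γ N] [IsScalarTower K Γ N]

/-- The basis of `M ⊗[K] N` over `Λ ⊗[K] Γ` consisting of the tensors `b i ⊗ₜ c j`. -/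
noncomputable def tensorBasis {ι κ : Type*} (b : Module.Basis ι Λ M) (c : Module.Basis κ Γ N) :
    Module.Basis (ι × κ) (Λ ⊗[K] Γ) (M ⊗[K] N) :=
  let e : M ⊗[K] N ≃ₗ[K] ι × κ →₀ Λ ⊗[K] Γ :=
    TensorProduct.congr (b.repr.restrictScalars K) (c.repr.restrictScalars K) ≪≫ₗ
      finsuppTensorFinsupp K K Λ Γ ι κ
  .ofRepr
    { e with
      map_smul' := map_smul_of_map_smul_tmul (f := e.toLinearMap.toAddMonoidHom)
        fun a g m n ↦ Finsupp.ext fun i ↦ by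
          obtain ⟨i, j⟩ := i
          simp [e, finsuppTensorFinsupp_apply] }

theorem projective_tensorProduct (hM : Module.Projective Λ M) (hN : Module.Projective Γ N) :
    Module.Projective (Λ ⊗[K] Γ) (M ⊗[K] N) := by
  obtain ⟨s, hs⟩ := hM
  obtain ⟨t, ht⟩ := hN
  have hfree : Module.Projective (Λ ⊗[K] Γ) ((M →₀ Λ) ⊗[K] (N →₀ Γ)) :=
    .of_basis (tensorBasis Finsupp.basisSingleOne Finsupp.basisSingleOne)
  have hs' : Finsupp.linearCombination Λ id ∘ₗ s = .id := LinearMap.ext hs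
  have ht' : Finsupp.linearCombination Γ id ∘ₗ t = .id := LinearMap.ext ht
  refine .of_split (tensorMap s t) (tensorMap (Finsupp.linearCombination Λ id)
    (Finsupp.linearCombination Γ id)) ?_
  rw [tensorMap_comp_tensorMap, hs', ht', tensorMap_id]

end Projective

/-- The coinduced module `Hom_K(R, V)`, on which `R` acts by `(r • f) x = f (x * r)`. It is a type
synonym because this action differs from the pointwise one on `R →ₗ[K] V` when `V` is an
`R`-module. -/
def Coinduced (K R V : Type*) [CommRing K] [Ring R] [Algebra K R] [AddCommGroup V] [Module K V] :=
  R →ₗ[K] V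

namespace Coinduced

variable {K R V : Type*} [CommRing K] [Ring R] [Algebra K R] [AddCommGroup V] [Module K V]

noncomputable instance : AddCommGroup (Coinduced K R V) :=
  inferInstanceAs (AddCommGroup (R →ₗ[K] V))

noncomputable instance : Module K (Coinduced K R V) :=
  inferInstanceAs (Module K (R →ₗ[K] V))

instance : FunLike (Coinduced K R V) R V :=
  inferInstanceAs (FunLike (R →ₗ[K] V) R V)

instance : LinearMapClass (Coinduced K R V) K R V :=
  inferInstanceAs (LinearMapClass (R →ₗ[K] V) K R V)

@[ext]
theorem ext {f g : Coinduced K R V} (h : ∀ x, f x = g x) : f = g :=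
  DFunLike.ext _ _ h

noncomputable instance : Module R (Coinduced K R V) where
  smul r f := LinearMap.comp f (LinearMap.mulRight K r)
  one_smul f := ext fun x ↦ congrArg f (mul_one x)
  mul_smul r s f := ext fun x ↦ congrArg f (mul_assoc x r s).symm
  smul_zero _ := rfl
  smul_add _ _ _ := rfl
  add_smul r s f := ext fun x ↦ (congrArg f (mul_add x r s)).trans (map_add f _ _)
  zero_smul f := ext fun x ↦ (congrArg f (mul_zero x)).trans (map_zero f)

theorem smul_apply (r : R) (f : Coinduced K R V) (x : R) : (r • f) x = f (x * r) :=
  rfl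

instance : IsScalarTower K R (Coinduced K R V) where
  smul_assoc c r f := ext fun x ↦ by
    rw [smul_apply, mul_smul_comm, map_smul]
    rfl

variable [Module R V] [IsScalarTower K R V]

variable (K R V) in
/-- The unit `v ↦ (r ↦ r • v)` of coinduction. -/
noncomputable def unit : V →ₗ[R] Coinduced K R V where
  toFun v := (LinearMap.toSpanSingleton R V v).restrictScalars K
  map_add' v w := ext fun r ↦ smul_add r v w
  map_smul' r v := ext fun s ↦ (mul_smul s r v).symm

theorem unit_injective : Function.Injective (unit K R V) := by
  intro v w h
  have unit_one (u : V) : unit K R V u 1 = u := one_smul R u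
  rw [← unit_one v, h, unit_one]

theorem baer {K R V : Type*} [Field K] [Ring R] [Algebra K R] [AddCommGroup V] [Module K V] :
    Module.Baer R (Coinduced K R V) := by
  intro I g
  let evalOne : I.restrictScalars K →ₗ[K] V :=
    LinearMap.applyₗ (1 : R) ∘ₗ (g.restrictScalars K : I →ₗ[K] R →ₗ[K] V)
  obtain ⟨h, hh⟩ := evalOne.exists_extend
  let h' : Coinduced K R V := h
  refine ⟨LinearMap.toSpanSingleton R _ h', fun x hx ↦ ext fun y ↦ ?_⟩
  have eval_smul : h (y * x) = g (y • ⟨x, hx⟩) 1 :=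
    LinearMap.congr_fun hh ⟨y * x, I.mul_mem_left y hx⟩
  rw [LinearMap.toSpanSingleton_apply, smul_apply]
  rw [map_smul, smul_apply, one_mul] at eval_smul
  exact eval_smul

end Coinduced

section Injective

theorem baer_of_split {R M M' : Type*} [Ring R] [AddCommGroup M] [Module R M]
    [AddCommGroup M'] [Module R M'] (s : M →ₗ[R] M') (p : M' →ₗ[R] M) (h : p ∘ₗ s = .id)
    (hM' : Module.Baer R M') : Module.Baer R M := by
  intro I g
  obtain ⟨g', hg'⟩ := hM' I (s ∘ₗ g)
  exact ⟨p ∘ₗ g', fun x hx ↦ by simpa [hg' x hx] using LinearMap.congr_fun h (g ⟨x, hx⟩)⟩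

theorem baer_of_injective (K : Type*) {R M : Type*} [Field K] [Ring R] [Algebra K R]
    [FiniteDimensional K R] [AddCommGroup M] [Module K M] [Module R M]
    (hM : Module.Injective R M) : Module.Baer R M := by
  obtain _ | _ := subsingleton_or_nontrivial M
  · exact fun I g ↦ ⟨0, fun _ _ ↦ Subsingleton.elim _ _⟩
  · obtain ⟨x, hx⟩ := exists_ne (0 : M)
    have : Small K := small_of_injective (smul_left_injective K hx)
    have : Small R := small_of_injective (Module.finBasis K R).equivFun.injective
    exact .of_injective hM

variable {K Λ Γ M N : Type*} [Field K] [Ring Λ] [Ring Γ] [Algebra K Λ] [Algebra K Γ]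
  [FiniteDimensional K Λ] [FiniteDimensional K Γ]
  [AddCommGroup M] [Module K M] [AddCommGroup N] [Module K N]

variable (K Λ Γ M N) in
/-- The canonical isomorphism `Hom_K(Λ, M) ⊗ Hom_K(Γ, N) ≃ Hom_K(Λ ⊗ Γ, M ⊗ N)` as an isomorphism
of coinduced modules. -/
noncomputable def coinducedTensorEquiv :
    Coinduced K Λ M ⊗[K] Coinduced K Γ N ≃ₗ[Λ ⊗[K] Γ] Coinduced K (Λ ⊗[K] Γ) (M ⊗[K] N) :=
  let e : Coinduced K Λ M ⊗[K] Coinduced K Γ N ≃ₗ[K] Coinduced K (Λ ⊗[K] Γ) (M ⊗[K] N) :=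
    homTensorHomEquiv K Λ Γ M N
  have e_tmul (f : Coinduced K Λ M) (h : Coinduced K Γ N) : e (f ⊗ₜ h) = TensorProduct.map f h :=
    homTensorHomEquiv_apply _
  have e_smul (a : Λ) (g : Γ) (f : Coinduced K Λ M) (h : Coinduced K Γ N) :
      e ((a • f) ⊗ₜ (g • h)) = (a ⊗ₜ[K] g : Λ ⊗[K] Γ) • e (f ⊗ₜ h) := by
    rw [e_tmul, e_tmul]
    exact TensorProduct.ext' fun x y ↦
      (congrArg (TensorProduct.map f h) (Algebra.TensorProduct.tmul_mul_tmul x a y g)).symm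
  { e with
    map_smul' := map_smul_of_map_smul_tmul (f := e.toLinearMap.toAddMonoidHom) e_smul }

variable [Module Λ M] [IsScalarTower K Λ M] [Module Γ N] [IsScalarTower K Γ N]

theorem injective_tensorProduct (hM : Module.Injective Λ M) (hN : Module.Injective Γ N) :
    Module.Injective (Λ ⊗[K] Γ) (M ⊗[K] N) := by
  obtain ⟨s, hs⟩ := (baer_of_injective K hM).extension_property (Coinduced.unit K Λ M)
    Coinduced.unit_injective .id
  obtain ⟨t, ht⟩ := (baer_of_injective K hN).extension_property (Coinduced.unit K Γ N)
    Coinduced.unit_injective .id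
  have baer_coinduced : Module.Baer (Λ ⊗[K] Γ) (Coinduced K Λ M ⊗[K] Coinduced K Γ N) :=
    .of_equiv (coinducedTensorEquiv K Λ Γ M N).symm Coinduced.baer
  refine (baer_of_split (tensorMap (Coinduced.unit K Λ M) (Coinduced.unit K Γ N))
    (tensorMap s t) ?_ baer_coinduced).injective
  rw [tensorMap_comp_tensorMap, hs, ht, tensorMap_id]

end Injective

section Covers

variable {K Λ Γ M M' N N' : Type*} [Field K] [Ring Λ] [Ring Γ] [Algebra K Λ] [Algebra K Γ]
  [AddCommGroup M] [Module K M] [Module Λ M] [IsScalarTower K Λ M]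
  [AddCommGroup M'] [Module K M'] [Module Λ M'] [IsScalarTower K Λ M']
  [AddCommGroup N] [Module K N] [Module Γ N] [IsScalarTower K Γ N]
  [AddCommGroup N'] [Module K N'] [Module Γ N'] [IsScalarTower K Γ N']

theorem IsProjectiveCover.tensorMap [IsSemiprimaryRing Λ] [IsSemiprimaryRing Γ]
    {f : M →ₗ[Λ] M'} (hf : IsProjectiveCover Λ f) {g : N →ₗ[Γ] N'}
    (hg : IsProjectiveCover Γ g) :
    IsProjectiveCover (Λ ⊗[K] Γ) (tensorMap (K := K) f g) := by
  obtain ⟨hM, hf_surj, hf_ker⟩ := hf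
  obtain ⟨hN, hg_surj, hg_ker⟩ := hg
  exact ⟨projective_tensorProduct hM hN, tensorMap_surjective hf_surj hg_surj,
    IsSuperfluous.ker_tensorMap hf_ker hf_surj hg_ker⟩

theorem IsInjectiveEnvelope.tensorMap [FiniteDimensional K Λ] [FiniteDimensional K Γ]
    {f : M →ₗ[Λ] M'} (hf : IsInjectiveEnvelope Λ f) {g : N →ₗ[Γ] N'}
    (hg : IsInjectiveEnvelope Γ g) :
    IsInjectiveEnvelope (Λ ⊗[K] Γ) (tensorMap (K := K) f g) := by
  obtain ⟨hM', hf_inj, hf_range⟩ := hf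
  obtain ⟨hN', hg_inj, hg_range⟩ := hg
  exact ⟨injective_tensorProduct hM' hN', tensorMap_injective hf_inj hg_inj,
    IsEssential.range_tensorMap hf_range hf_inj hg_range⟩

end Covers

theorem projectiveCover_injectiveEnvelope_tensorProduct_general
    (K : Type*) {Λ Γ M N PM PN IM IN : Type*} [Field K] [Ring Λ] [Ring Γ]
    [Algebra K Λ] [Algebra K Γ] [FiniteDimensional K Λ] [FiniteDimensional K Γ]
    [AddCommGroup M] [Module K M] [Module Λ M] [IsScalarTower K Λ M]
    [AddCommGroup N] [Module K N] [Module Γ N] [IsScalarTower K Γ N]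
    [AddCommGroup PM] [Module K PM] [Module Λ PM] [IsScalarTower K Λ PM]
    [AddCommGroup PN] [Module K PN] [Module Γ PN] [IsScalarTower K Γ PN]
    [AddCommGroup IM] [Module K IM] [Module Λ IM] [IsScalarTower K Λ IM]
    [AddCommGroup IN] [Module K IN] [Module Γ IN] [IsScalarTower K Γ IN]
    {πM : PM →ₗ[Λ] M} {πN : PN →ₗ[Γ] N} {ιM : M →ₗ[Λ] IM} {ιN : N →ₗ[Γ] IN}
    (hπM : IsProjectiveCover Λ πM) (hπN : IsProjectiveCover Γ πN)
    (hιM : IsInjectiveEnvelope Λ ιM) (hιN : IsInjectiveEnvelope Γ ιN) :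
    (∃ F : (PM ⊗[K] PN) →ₗ[Λ ⊗[K] Γ] (M ⊗[K] N),
        (∀ (p : PM) (q : PN), F (p ⊗ₜ[K] q) = (πM p) ⊗ₜ[K] (πN q)) ∧
          IsProjectiveCover (Λ ⊗[K] Γ) F) ∧
      (∃ G : (M ⊗[K] N) →ₗ[Λ ⊗[K] Γ] (IM ⊗[K] IN),
        (∀ (x : M) (y : N), G (x ⊗ₜ[K] y) = (ιM x) ⊗ₜ[K] (ιN y)) ∧
          IsInjectiveEnvelope (Λ ⊗[K] Γ) G) := by
  have : IsArtinianRing Λ := .of_finite K Λ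
  have : IsArtinianRing Γ := .of_finite K Γ
  exact ⟨⟨tensorMap πM πN, tensorMap_tmul πM πN, hπM.tensorMap hπN⟩,
    ⟨tensorMap ιM ιN, tensorMap_tmul ιM ιN, hιM.tensorMap hιN⟩⟩

open TensorProduct in
/-- Tensor products of projective covers are projective covers, and tensor
products of injective envelopes are injective envelopes, over `Λ ⊗[K] Γ`. -/
theorem projectiveCover_injectiveEnvelope_tensorProduct
    (K Λ Γ M N PM PN IM IN : Type*) [Field K] [IsAlgClosed K] [Ring Λ] [Ring Γ]
    [Algebra K Λ] [Algebra K Γ] [FiniteDimensional K Λ] [FiniteDimensional K Γ]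
    [AddCommGroup M] [Module K M] [Module Λ M] [IsScalarTower K Λ M] [Module.Finite Λ M]
    [AddCommGroup N] [Module K N] [Module Γ N] [IsScalarTower K Γ N] [Module.Finite Γ N]
    [AddCommGroup PM] [Module K PM] [Module Λ PM] [IsScalarTower K Λ PM] [Module.Finite Λ PM]
    [AddCommGroup PN] [Module K PN] [Module Γ PN] [IsScalarTower K Γ PN] [Module.Finite Γ PN]
    [AddCommGroup IM] [Module K IM] [Module Λ IM] [IsScalarTower K Λ IM] [Module.Finite Λ IM]
    [AddCommGroup IN] [Module K IN] [Module Γ IN] [IsScalarTower K Γ IN] [Module.Finite Γ IN]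
    (πM : PM →ₗ[Λ] M) (πN : PN →ₗ[Γ] N) (ιM : M →ₗ[Λ] IM) (ιN : N →ₗ[Γ] IN)
    (hπM : IsProjectiveCover Λ πM) (hπN : IsProjectiveCover Γ πN)
    (hιM : IsInjectiveEnvelope Λ ιM) (hιN : IsInjectiveEnvelope Γ ιN) :
    (∃ F : (PM ⊗[K] PN) →ₗ[Λ ⊗[K] Γ] (M ⊗[K] N),
        (∀ (p : PM) (q : PN), F (p ⊗ₜ[K] q) = (πM p) ⊗ₜ[K] (πN q)) ∧
          IsProjectiveCover (Λ ⊗[K] Γ) F) ∧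
      (∃ G : (M ⊗[K] N) →ₗ[Λ ⊗[K] Γ] (IM ⊗[K] IN),
        (∀ (x : M) (y : N), G (x ⊗ₜ[K] y) = (ιM x) ⊗ₜ[K] (ιN y)) ∧
          IsInjectiveEnvelope (Λ ⊗[K] Γ) G) :=
  projectiveCover_injectiveEnvelope_tensorProduct_general K hπM hπN hιM hιN
end
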